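/- arXiv:1607.07205 — 2 statements merged into one kernel-verified Lean document; each statement's English description precedes it below -/
import Mathlib

section
/- Let K be a field, n ≥ 1, X ∈ sl_n(K) an sl_n(K)-regular trace-zero matrix, and A ∈ sl_n(K) a trace-zero matrix. Then there exists a trace-zero matrix Y ∈ sl_n(K) with XY − YX = A if and only if tr(X^r · A) = 0 for all r = 1, …, n−1. -/
open Matrix

/-- The centralizer of a matrix `X` inside all `n × n` matrices, as a submodule. -/
def glCent {R : Type*} [CommRing R] {n : ℕ} (X : Matrix (Fin n) (Fin n) R) :
    Submodule R (Matrix (Fin n) (Fin n) R) where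
  carrier := {Y | X * Y = Y * X}
  add_mem' := fun {a b} ha hb => by
    simp only [Set.mem_setOf_eq] at *
    rw [Matrix.mul_add, Matrix.add_mul, ha, hb]
  zero_mem' := by simp
  smul_mem' := fun c a ha => by
    simp only [Set.mem_setOf_eq] at *
    rw [Matrix.mul_smul, Matrix.smul_mul, ha]

/-- The centralizer of a matrix `X` inside the trace-zero `n × n` matrices, as a submodule. -/
def slCent {R : Type*} [CommRing R] {n : ℕ} (X : Matrix (Fin n) (Fin n) R) :
    Submodule R (Matrix (Fin n) (Fin n) R) where
  carrier := {Y | Y.trace = 0 ∧ X * Y = Y * X}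
  add_mem' := fun {a b} ha hb =>
    ⟨by rw [trace_add, ha.1, hb.1, add_zero],
     by rw [Matrix.mul_add, Matrix.add_mul, ha.2, hb.2]⟩
  zero_mem' := ⟨by simp, by simp⟩
  smul_mem' := fun c a ha =>
    ⟨by rw [trace_smul, ha.1, smul_zero],
     by rw [Matrix.mul_smul, Matrix.smul_mul, ha.2]⟩

/-!
The trace form makes `Y ↦ X * Y - Y * X` skew-adjoint, so its image is the trace-orthogonal
complement of the centralizer of `X`. Regularity makes this centralizer `n`-dimensional, which
forces it to be `K[X]`, spanned by `1, X, …, X ^ (n - 1)`; and it contains a matrix of nonzero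
trace, a multiple of which can be subtracted from `Y` to make `Y` trace-zero.

To see that an `n`-dimensional centralizer is `K[X]`, regard `Kⁿ` as a `K[T]`-module on which `T`
acts by `X`. As a module it is isomorphic to a ring `B = ∏ i, K[T] ⧸ (q i)`, and the centralizer
becomes `End B`, which contains the multiplications by elements of `B`. If both have dimension `n`,
every endomorphism is a multiplication, so there are no nonzero maps between distinct factors.
Hence the `q i` are pairwise coprime, and by the Chinese remainder theorem every multiplication is
multiplication by a polynomial.
-/

open Polynomial Module

section PrincipalIdealDomain

theorem mem_of_subsingleton_linearMap_quotient {R : Type*} [CommRing R] {I J : Ideal R}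
    [Subsingleton (R ⧸ I →ₗ[R] R ⧸ J)] {c : R} (hc : ∀ a ∈ I, a * c ∈ J) : c ∈ J := by
  let f : R →ₗ[R] R ⧸ J := LinearMap.toSpanSingleton R _ (Ideal.Quotient.mk J c)
  have hf : I ≤ LinearMap.ker f := fun a ha => Ideal.Quotient.eq_zero_iff_mem.2 (hc a ha)
  have hf1 : f 1 = 0 :=
    LinearMap.congr_fun (Subsingleton.elim (Submodule.liftQ I f hf) 0) (Ideal.Quotient.mk I 1)
  rw [← Ideal.Quotient.eq_zero_iff_mem]
  simpa [f] using hf1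

theorem isCoprime_of_subsingleton_linearMap_quotient {R : Type*} [CommRing R] [IsDomain R]
    [IsPrincipalIdealRing R] {I J : Ideal R} (hJ : J ≠ ⊥) [Subsingleton (R ⧸ I →ₗ[R] R ⧸ J)] :
    IsCoprime I J := by
  obtain ⟨d, hd : I ⊔ J = Ideal.span {d}⟩ := IsPrincipalIdealRing.principal (I ⊔ J)
  obtain ⟨b, rfl : J = Ideal.span {b}⟩ := IsPrincipalIdealRing.principal J
  have d_dvd {a : R} (ha : a ∈ I ⊔ Ideal.span {b}) : d ∣ a := by
    rwa [hd, Ideal.mem_span_singleton] at ha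
  obtain ⟨c, rfl⟩ := d_dvd (Ideal.mem_sup_right (Ideal.mem_span_singleton_self b))
  have hc0 : c ≠ 0 := by
    rintro rfl
    simp at hJ
  have hc : d * c ∣ 1 * c := by
    rw [one_mul, ← Ideal.mem_span_singleton]
    exact mem_of_subsingleton_linearMap_quotient fun a ha =>
      Ideal.mem_span_singleton.2 (mul_dvd_mul_right (d_dvd (Ideal.mem_sup_left ha)) c)
  rw [Ideal.isCoprime_iff_sup_eq, hd, Ideal.span_singleton_eq_top]
  exact isUnit_of_dvd_one ((mul_dvd_mul_iff_right hc0).1 hc)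

theorem subsingleton_linearMap_of_surjective_lmul_pi {R ι : Type*} [CommSemiring R]
    {B : ι → Type*} [∀ i, Semiring (B i)] [∀ i, Algebra R (B i)]
    (h : Function.Surjective (Algebra.lmul R (∀ i, B i))) {i j : ι} (hij : i ≠ j) :
    Subsingleton (B i →ₗ[R] B j) := by
  classical
  refine subsingleton_of_forall_eq 0 fun f => LinearMap.ext fun x => ?_
  obtain ⟨w, hw⟩ := h (LinearMap.single R B j ∘ₗ f ∘ₗ LinearMap.proj i)
  simpa [hij.symm] using (congr_fun (LinearMap.congr_fun hw (Pi.single i x)) j).symm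

theorem surjective_algebraMap_pi_quotient_of_surjective_lmul {R ι : Type*} [CommRing R] [IsDomain R]
    [IsPrincipalIdealRing R] [Finite ι] {I : ι → Ideal R} (hI : ∀ i, I i ≠ ⊥)
    (h : Function.Surjective (Algebra.lmul R (∀ i, R ⧸ I i))) :
    Function.Surjective (algebraMap R (∀ i, R ⧸ I i)) := by
  have hcop : Pairwise (Function.onFun IsCoprime I) := fun i j hij =>
    have := subsingleton_linearMap_of_surjective_lmul_pi h hij
    isCoprime_of_subsingleton_linearMap_quotient (hI j)
  intro w
  obtain ⟨r, hr⟩ := Ideal.pi_quotient_surjective hcop w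
  exact ⟨r, funext hr⟩

universe u in
theorem exists_linearEquiv_pi_quotient_of_isTorsion {R : Type u} {M : Type*} [CommRing R]
    [IsDomain R] [IsPrincipalIdealRing R] [AddCommGroup M] [Module R M] [Module.Finite R M]
    (hM : Module.IsTorsion R M) :
    ∃ (ι : Type u) (_ : Finite ι) (I : ι → Ideal R),
      (∀ i, I i ≠ ⊥) ∧ Nonempty (M ≃ₗ[R] ∀ i, R ⧸ I i) := by
  classical
  obtain ⟨ι, _, p, hp, e, ⟨φ⟩⟩ := Module.equiv_directSum_of_isTorsion hM
  exact ⟨ι, inferInstance, fun i => Ideal.span {p i ^ e i},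
    fun i => Ideal.span_singleton_eq_bot.not.2 (pow_ne_zero _ (hp i).ne_zero),
    ⟨φ.trans (DirectSum.linearEquivFunOnFintype R ι _)⟩⟩

end PrincipalIdealDomain

section Algebra

variable (K R B : Type*) [Field K] [CommRing R] [Ring B] [Algebra K R] [Algebra R B]
  [Algebra K B] [IsScalarTower K R B] [FiniteDimensional K B]

theorem finrank_le_finrank_end_algebra : finrank K B ≤ finrank K (Module.End R B) :=
  LinearMap.finrank_le_finrank_of_injective (f := (Algebra.lmul R B).toLinearMap.restrictScalars K)
    Algebra.lmul_injective

theorem surjective_lmul_of_finrank_end_eq (h : finrank K (Module.End R B) = finrank K B) :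
    Function.Surjective (Algebra.lmul R B) :=
  (LinearMap.injective_iff_surjective_of_finrank_eq_finrank h.symm
    (f := (Algebra.lmul R B).toLinearMap.restrictScalars K)).1 Algebra.lmul_injective

end Algebra

section TorsionModule

variable {K R M : Type*} [Field K] [CommRing R] [IsDomain R] [IsPrincipalIdealRing R]
  [Algebra K R] [AddCommGroup M] [Module R M] [Module K M] [IsScalarTower K R M]
  [FiniteDimensional K M]

theorem finrank_le_finrank_end_of_isTorsion (hM : Module.IsTorsion R M) :
    finrank K M ≤ finrank K (Module.End R M) := by
  have : Module.Finite R M := .of_restrictScalars_finite K R M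
  obtain ⟨ι, _, I, -, ⟨e⟩⟩ := exists_linearEquiv_pi_quotient_of_isTorsion hM
  have : FiniteDimensional K (∀ i, R ⧸ I i) := (e.restrictScalars K).finiteDimensional
  rw [(e.restrictScalars K).finrank_eq, (e.conjAlgEquiv K).toLinearEquiv.finrank_eq]
  exact finrank_le_finrank_end_algebra K R _

theorem surjective_algebraMap_end_of_finrank_eq (hM : Module.IsTorsion R M)
    (h : finrank K (Module.End R M) = finrank K M) :
    Function.Surjective (algebraMap R (Module.End R M)) := by
  have : Module.Finite R M := .of_restrictScalars_finite K R M
  obtain ⟨ι, _, I, hI, ⟨e⟩⟩ := exists_linearEquiv_pi_quotient_of_isTorsion hM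
  have : FiniteDimensional K (∀ i, R ⧸ I i) := (e.restrictScalars K).finiteDimensional
  rw [(e.restrictScalars K).finrank_eq, (e.conjAlgEquiv K).toLinearEquiv.finrank_eq] at h
  have hlmul := surjective_lmul_of_finrank_end_eq K R _ h
  have hmap := surjective_algebraMap_pi_quotient_of_surjective_lmul hI hlmul
  intro g
  obtain ⟨r, hr⟩ := (hlmul.comp hmap) (e.conjAlgEquiv R g)
  refine ⟨r, (e.conjAlgEquiv R).injective ?_⟩
  rw [← hr, AlgEquiv.commutes, Function.comp_apply, AlgHom.commutes]

end TorsionModule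

section EndCentralizer

theorem mem_centralizer_singleton_iff {R A : Type*} [CommSemiring R] [Semiring A] [Algebra R A]
    {a b : A} : b ∈ Subalgebra.centralizer R {a} ↔ a * b = b * a := by
  simp [Subalgebra.mem_centralizer_iff]

theorem map_centralizer_singleton {R A B : Type*} [CommSemiring R] [Semiring A] [Semiring B]
    [Algebra R A] [Algebra R B] (e : A ≃ₐ[R] B) (a : A) :
    (Subalgebra.centralizer R {a}).map (e : A →ₐ[R] B) = Subalgebra.centralizer R {e a} := by
  ext b
  obtain ⟨c, rfl⟩ := e.surjective b
  simp [mem_centralizer_singleton_iff, ← map_mul]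

/-- Endomorphisms commuting with `f`, viewed as endomorphisms of the `R[X]`-module `AEval' f`, on
which `X` acts by `f`. -/
noncomputable def centralizerEquivEndAEval {R M : Type*} [CommSemiring R] [AddCommMonoid M]
    [Module R M] (f : Module.End R M) :
    Subalgebra.centralizer R {f} ≃ₗ[R] Module.End R[X] (AEval' f) where
  toFun g := LinearMap.ofAEval f (AEval'.of f ∘ₗ g.1) fun m => by
    simpa [AEval'.X_smul_of] using
      (LinearMap.congr_fun (mem_centralizer_singleton_iff.1 g.2) m).symm
  map_add' g h := rfl
  map_smul' c g := rfl
  invFun h := ⟨(AEval'.of f).symm ∘ₗ h.restrictScalars R ∘ₗ (AEval'.of f).toLinearMap, by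
    refine mem_centralizer_singleton_iff.2 (LinearMap.ext fun m => (AEval'.of f).injective ?_)
    simp [← AEval'.X_smul_of]⟩
  left_inv g := rfl
  right_inv h := rfl

variable {K V : Type*} [Field K] [AddCommGroup V] [Module K V] [FiniteDimensional K V]

theorem finrank_le_finrank_centralizer_end (f : Module.End K V) :
    finrank K V ≤ finrank K (Subalgebra.centralizer K {f}) := by
  rw [(AEval'.of f).finrank_eq, (centralizerEquivEndAEval f).finrank_eq]
  exact finrank_le_finrank_end_of_isTorsion (AEval.isTorsion_of_finiteDimensional K V f)

theorem centralizer_end_eq_adjoin {f : Module.End K V}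
    (h : finrank K (Subalgebra.centralizer K {f}) = finrank K V) :
    Subalgebra.centralizer K {f} = Algebra.adjoin K {f} := by
  rw [(AEval'.of f).finrank_eq, (centralizerEquivEndAEval f).finrank_eq] at h
  have hsurj := surjective_algebraMap_end_of_finrank_eq
    (AEval.isTorsion_of_finiteDimensional K V f) h
  refine le_antisymm (fun g hg => ?_)
    (Algebra.adjoin_singleton_le (mem_centralizer_singleton_iff.2 rfl))
  obtain ⟨p, hp⟩ := hsurj (centralizerEquivEndAEval f ⟨g, hg⟩)
  rw [Algebra.adjoin_singleton_eq_range_aeval]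
  exact ⟨p, LinearMap.ext fun m => LinearMap.congr_fun hp (AEval'.of f m)⟩

end EndCentralizer

section MatrixCentralizer

variable {K ι : Type*} [Field K] [Fintype ι] [DecidableEq ι]

theorem finrank_centralizer_toLinAlgEquiv' (X : Matrix ι ι K) :
    finrank K (Subalgebra.centralizer K {X}) =
      finrank K (Subalgebra.centralizer K {toLinAlgEquiv' X}) := by
  rw [← map_centralizer_singleton]
  exact (toLinAlgEquiv'.subalgebraMap _).toLinearEquiv.finrank_eq

theorem card_le_finrank_centralizer (X : Matrix ι ι K) :
    Fintype.card ι ≤ finrank K (Subalgebra.centralizer K {X}) := by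
  rw [finrank_centralizer_toLinAlgEquiv', ← finrank_fintype_fun_eq_card K]
  exact finrank_le_finrank_centralizer_end _

theorem centralizer_eq_adjoin {X : Matrix ι ι K}
    (h : finrank K (Subalgebra.centralizer K {X}) = Fintype.card ι) :
    Subalgebra.centralizer K {X} = Algebra.adjoin K {X} := by
  rw [finrank_centralizer_toLinAlgEquiv', ← finrank_fintype_fun_eq_card K] at h
  apply Subalgebra.map_injective (f := (toLinAlgEquiv' : Matrix ι ι K ≃ₐ[K] _).toAlgHom)
    toLinAlgEquiv'.injective
  rw [AlgHom.map_adjoin_singleton]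
  exact (map_centralizer_singleton _ _).trans (centralizer_end_eq_adjoin h)

end MatrixCentralizer

section Trace

theorem trace_mul_commutator {ι R : Type*} [Fintype ι] [CommRing R] (X Y Z : Matrix ι ι R) :
    (Z * (X * Y - Y * X)).trace = ((Z * X - X * Z) * Y).trace := by
  rw [mul_sub, sub_mul, trace_sub, trace_sub, Matrix.mul_assoc, Matrix.mul_assoc,
    ← Matrix.mul_assoc Z Y, Matrix.trace_mul_comm (Z * Y)]

theorem exists_eq_trace_mul {R m n : Type*} [CommSemiring R] [Fintype m] [Fintype n]
    (φ : Matrix m n R →ₗ[R] R) : ∃ Z : Matrix n m R, ∀ Y, φ Y = (Z * Y).trace := by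
  classical
  let Z : Matrix n m R := Matrix.of fun j i => φ (Matrix.single i j 1)
  have hφ : φ = Matrix.traceLinearMap n R R ∘ₗ mulLeftLinearMap n R Z :=
    Matrix.ext_linearMap R fun i j => LinearMap.ext_ring (by simp [Z, Matrix.trace_mul_single])
  exact ⟨Z, LinearMap.congr_fun hφ⟩

theorem exists_commutator_eq_iff_forall_centralizer {K ι : Type*} [Field K] [Fintype ι]
    [DecidableEq ι] {X A : Matrix ι ι K} :
    (∃ Y, X * Y - Y * X = A) ↔ ∀ Z ∈ Subalgebra.centralizer K {X}, (Z * A).trace = 0 := by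
  constructor
  · rintro ⟨Y, rfl⟩ Z hZ
    rw [trace_mul_commutator, mem_centralizer_singleton_iff.1 hZ, sub_self, zero_mul, trace_zero]
  · intro h
    by_contra hA
    obtain ⟨φ, hφA, hφ⟩ := Submodule.exists_le_ker_of_notMem
      (p := LinearMap.range (LinearMap.mulLeft K X - LinearMap.mulRight K X)) hA
    obtain ⟨Z, hZ⟩ := exists_eq_trace_mul φ
    have hZX : Z * X - X * Z = 0 := Matrix.ext_iff_trace_mul_right.2 fun Y => by
      rw [← trace_mul_commutator, ← hZ, zero_mul, trace_zero]
      exact hφ ⟨Y, rfl⟩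
    exact hφA ((hZ A).trans (h Z (mem_centralizer_singleton_iff.2 (sub_eq_zero.1 hZX).symm)))

theorem exists_trace_eq_zero_commutator_eq_iff {R ι : Type*} [CommRing R] [Fintype ι]
    {X Z A : Matrix ι ι R} (hXZ : X * Z = Z * X) (hZ : IsUnit Z.trace) :
    (∃ Y, Y.trace = 0 ∧ X * Y - Y * X = A) ↔ ∃ Y, X * Y - Y * X = A := by
  refine ⟨fun ⟨Y, _, hY⟩ => ⟨Y, hY⟩, ?_⟩
  rintro ⟨Y, rfl⟩
  refine ⟨Y - (Y.trace * Ring.inverse Z.trace) • Z, ?_, ?_⟩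
  · rw [trace_sub, trace_smul, smul_eq_mul, Ring.inverse_mul_cancel_right _ _ hZ, sub_self]
  · rw [mul_sub, sub_mul, Matrix.mul_smul, Matrix.smul_mul, hXZ, sub_sub_sub_cancel_right]

theorem forall_adjoin_trace_mul_eq_zero_iff {R ι : Type*} [CommRing R] [Fintype ι]
    [DecidableEq ι] {X A : Matrix ι ι R} :
    (∀ Z ∈ Algebra.adjoin R {X}, (Z * A).trace = 0) ↔
      ∀ r < Fintype.card ι, (X ^ r * A).trace = 0 := by
  refine ⟨fun h r _ => h _ (pow_mem (Algebra.self_mem_adjoin_singleton R X) r), fun h Z hZ => ?_⟩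
  nontriviality R
  rw [Algebra.adjoin_singleton_eq_range_aeval] at hZ
  obtain ⟨p, rfl⟩ := hZ
  let φ : R[X] →ₗ[R] R := traceLinearMap ι R R ∘ₗ LinearMap.mulRight R A ∘ₗ (aeval X).toLinearMap
  have hdeg : p %ₘ X.charpoly ∈ degreeLT R (Fintype.card ι) := by
    rw [mem_degreeLT, ← X.charpoly_degree_eq_dim]
    exact degree_modByMonic_lt p X.charpoly_monic
  have hker : degreeLT R (Fintype.card ι) ≤ LinearMap.ker φ := by
    classical
    rw [degreeLT_eq_span_X_pow, Submodule.span_le]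
    intro q hq
    simp only [Finset.coe_image, Finset.coe_range, Set.mem_image, Set.mem_Iio] at hq
    obtain ⟨r, hr, rfl⟩ := hq
    simpa [φ] using h r hr
  simpa [φ, ← aeval_eq_aeval_mod_charpoly] using hker hdeg

theorem forall_lt_trace_pow_mul_eq_zero_iff {R ι : Type*} [Semiring R] [Fintype ι]
    [DecidableEq ι] {X A : Matrix ι ι R} (hA : A.trace = 0) {n : ℕ} :
    (∀ r < n, (X ^ r * A).trace = 0) ↔ ∀ r, 1 ≤ r → r ≤ n - 1 → (X ^ r * A).trace = 0 := by
  refine ⟨fun h r _ _ => h r (by omega), fun h r hr => ?_⟩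
  rcases Nat.eq_zero_or_pos r with rfl | hr0
  · rwa [pow_zero, one_mul]
  · exact h r hr0 (by omega)

end Trace

section TraceZeroCentralizer

theorem finrank_inf_ker_add_one {K V : Type*} [Field K] [AddCommGroup V] [Module K V]
    {S : Submodule K V} [FiniteDimensional K S] {φ : Module.Dual K V} {x : V} (hx : x ∈ S)
    (hφ : φ x ≠ 0) :
    finrank K ↥(S ⊓ LinearMap.ker φ) + 1 = finrank K S := by
  have h : φ ∘ₗ S.subtype ≠ 0 := fun h => hφ (LinearMap.congr_fun h ⟨x, hx⟩)
  rw [← Dual.finrank_ker_add_one_of_ne_zero h, LinearMap.ker_comp,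
    ← Submodule.finrank_map_subtype_eq, Submodule.map_comap_subtype]

theorem exists_mem_centralizer_trace_ne_zero {K ι : Type*} [Field K] [Fintype ι] [DecidableEq ι]
    {X : Matrix ι ι K}
    (h : finrank K ↥(Subalgebra.toSubmodule (Subalgebra.centralizer K {X}) ⊓
      LinearMap.ker (traceLinearMap ι K K)) < Fintype.card ι) :
    ∃ Z ∈ Subalgebra.centralizer K {X}, Z.trace ≠ 0 := by
  by_contra! hall
  rw [inf_eq_left.2 fun Z hZ => hall Z hZ] at h
  exact h.not_ge (card_le_finrank_centralizer X)

theorem slCent_eq_centralizer_inf_ker_trace {R : Type*} [CommRing R] {n : ℕ}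
    (X : Matrix (Fin n) (Fin n) R) :
    slCent X = Subalgebra.toSubmodule (Subalgebra.centralizer R {X}) ⊓
      LinearMap.ker (traceLinearMap (Fin n) R R) := by
  ext Y
  rw [Submodule.mem_inf, Subalgebra.mem_toSubmodule, mem_centralizer_singleton_iff, and_comm]
  rfl

end TraceZeroCentralizer

theorem commutator_criterion_field_general {K ι : Type*} [Field K] [Fintype ι] [DecidableEq ι]
    (X A : Matrix ι ι K)
    (hreg : finrank K ↥(Subalgebra.toSubmodule (Subalgebra.centralizer K {X}) ⊓
      LinearMap.ker (traceLinearMap ι K K)) + 1 = Fintype.card ι) :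
    (∃ Y : Matrix ι ι K, Y.trace = 0 ∧ X * Y - Y * X = A) ↔
      ∀ r < Fintype.card ι, (X ^ r * A).trace = 0 := by
  obtain ⟨Z, hZ, hZ0⟩ := exists_mem_centralizer_trace_ne_zero (Nat.lt_of_succ_le hreg.le)
  have hdim : finrank K (Subalgebra.centralizer K {X}) = Fintype.card ι :=
    (finrank_inf_ker_add_one (φ := traceLinearMap ι K K) hZ hZ0).symm.trans hreg
  calc (∃ Y, Y.trace = 0 ∧ X * Y - Y * X = A)
      ↔ ∃ Y, X * Y - Y * X = A :=
        exists_trace_eq_zero_commutator_eq_iff (mem_centralizer_singleton_iff.1 hZ) hZ0.isUnit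
    _ ↔ ∀ Z ∈ Subalgebra.centralizer K {X}, (Z * A).trace = 0 :=
        exists_commutator_eq_iff_forall_centralizer
    _ ↔ ∀ Z ∈ Algebra.adjoin K {X}, (Z * A).trace = 0 := by
        rw [centralizer_eq_adjoin hdim]
    _ ↔ ∀ r < Fintype.card ι, (X ^ r * A).trace = 0 := forall_adjoin_trace_mul_eq_zero_iff

/-- Laffey–Reams criterion over a field: for an `sl_n(K)`-regular trace-zero `X` and a
trace-zero `A`, `A = [X, Y]` for some trace-zero `Y` iff `tr(X^r A) = 0` for `r = 1, …, n-1`. -/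
theorem commutator_criterion_field {K : Type*} [Field K] {n : ℕ} (hn : 1 ≤ n)
    (X : Matrix (Fin n) (Fin n) K) (hX : X.trace = 0)
    (hreg : Module.finrank K (slCent X) = n - 1)
    (A : Matrix (Fin n) (Fin n) K) (hA : A.trace = 0) :
    (∃ Y : Matrix (Fin n) (Fin n) K, Y.trace = 0 ∧ X * Y - Y * X = A) ↔
      ∀ r : ℕ, 1 ≤ r → r ≤ n - 1 → (X ^ r * A).trace = 0 := by
  rw [slCent_eq_centralizer_inf_ker_trace] at hreg
  simpa [forall_lt_trace_pow_mul_eq_zero_iff hA] using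
    commutator_criterion_field_general X A (by rw [hreg, Fintype.card_fin, Nat.sub_add_cancel hn])
end

section
/- Let S be a commutative local ring with maximal ideal m, and let X ∈ sl_n(S) be a trace-zero matrix such that the reduction X mod m is sl_n(S/m)-regular. Then the canonical reduction map from {Y ∈ M_n(S) : tr(Y) = 0 and XY = YX} to {Z ∈ M_n(S/m) : tr(Z) = 0 and (X mod m)Z = Z(X mod m)} is surjective. -/
open Matrix

/-!
Over a field `K`, the centralizer of `A` in `gl_n` is the endomorphism ring of the `K[X]`-module
`M = Kⁿ` on which `X` acts as `A`. Some `v : M` has all of `M` as its orbit under these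
endomorphisms, so the centralizer has dimension at least `n`. If the dimension is `n`, an
endomorphism is determined by its value at `v`; as the simple quotients of `M` embed in `M`, any
proper submodule is killed by a nonzero endomorphism, so `v` generates `M`, the centralizer is
`K[A]`, and polynomials in `A` lift coefficientwise.

For a trace-zero centralizer of dimension `n - 1 < n`, some centralizing matrix has nonzero trace,
so the full centralizer has dimension `n` and its elements lift. The lift of that matrix has unit
trace, and subtracting a multiple of it corrects the trace of any other lift.
-/

open Polynomial Module

section Artinian

variable {R M : Type*} [CommRing R] [AddCommGroup M] [Module R M] [Module.Finite R M]
  [IsArtinian R M]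

variable (R M) in
theorem isArtinianRing_quotient_annihilator : IsArtinianRing (R ⧸ annihilator R M) := by
  obtain ⟨s, hs⟩ := Module.Finite.fg_top (R := R) (M := M)
  let f : R →ₗ[R] s → M := .pi fun m ↦ .toSpanSingleton R M m
  have hf : annihilator R M = LinearMap.ker f := by
    rw [← Submodule.annihilator_top, ← hs]
    ext r
    simp [f, Submodule.mem_annihilator_span, funext_iff]
  have : IsArtinian R (R ⧸ annihilator R M) :=
    isArtinian_of_injective ((annihilator R M).liftQ f hf.le)
      (LinearMap.ker_eq_bot.mp (Submodule.ker_liftQ_eq_bot _ _ _ hf.ge))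
  exact isArtinian_of_tower R this

variable [IsNoetherianRing R]

theorem mem_associatedPrimes_of_annihilator_le {I : Ideal R} [I.IsPrime]
    (hI : annihilator R M ≤ I) : I ∈ associatedPrimes R M := by
  have := isArtinianRing_quotient_annihilator R M
  apply associatedPrimes.minimalPrimes_annihilator_subset_associatedPrimes
  rw [Ideal.minimalPrimes_eq_comap]
  refine ⟨I.map (Ideal.Quotient.mk _), ?_, by simpa [Ideal.comap_map_of_surjective]⟩
  rw [Ideal.mem_minimalPrimes_iff_isPrime]
  exact Ideal.map_isPrime_of_surjective Ideal.Quotient.mk_surjective (by simpa)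

theorem exists_end_ne_zero_le_ker {N : Submodule R M} (hN : N ≠ ⊤) :
    ∃ c : Module.End R M, c ≠ 0 ∧ N ≤ LinearMap.ker c := by
  obtain ⟨P, hP, hNP⟩ := (eq_top_or_exists_le_coatom N).resolve_left hN
  have : IsSimpleModule R (M ⧸ P) := isSimpleModule_iff_isCoatom.mpr hP
  obtain ⟨I, hI, ⟨e⟩⟩ := isSimpleModule_iff_quot_maximal.mp this
  have hann : annihilator R M ≤ I := by
    rw [← I.annihilator_quotient, ← e.annihilator_eq]
    exact P.mkQ.annihilator_le_of_surjective P.mkQ_surjective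
  obtain ⟨-, f, hf⟩ := (isAssociatedPrime_iff_exists_injective_linearMap I M).mp
    (mem_associatedPrimes_of_annihilator_le hann)
  have hker : LinearMap.ker ((f ∘ₗ e.toLinearMap) ∘ₗ P.mkQ) = P := by
    rw [LinearMap.ker_comp_of_ker_eq_bot, P.ker_mkQ]
    exact LinearMap.ker_eq_bot.mpr (hf.comp e.injective)
  exact ⟨_, fun h0 ↦ hP.ne_top (by rw [← hker, h0, LinearMap.ker_zero]), hNP.trans hker.ge⟩

end Artinian

-- The cyclic decomposition makes `M` the underlying module of an `R`-algebra, in which every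
-- element is the image of `1` under a multiplication map.
theorem exists_surjective_end_apply (R M : Type*) [CommRing R] [IsDomain R]
    [IsPrincipalIdealRing R] [AddCommGroup M] [Module R M] [Module.Finite R M] :
    ∃ v : M, Function.Surjective (LinearMap.applyₗ v : Module.End R M →ₗ[R] M) := by
  obtain ⟨n, ι, _, p, -, k, ⟨e⟩⟩ := equiv_free_prod_directSum (R := R) (M := M)
  let e' : M ≃ₗ[R] (Fin n → R) × ∀ i, R ⧸ Ideal.span {p i ^ k i} := e ≪≫ₗ
    (Finsupp.linearEquivFunOnFinite R R (Fin n)).prodCongr (DirectSum.linearEquivFunOnFintype R ι _)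
  refine ⟨e'.symm 1, fun w ↦ ⟨e'.symm ∘ₗ LinearMap.mulLeft R (e' w) ∘ₗ e', ?_⟩⟩
  simp

theorem module_finite_end (A R M : Type*) [CommRing A] [IsNoetherianRing A] [Ring R] [Algebra A R]
    [AddCommGroup M] [Module A M] [Module R M] [IsScalarTower A R M] [Module.Finite A M] :
    Module.Finite A (Module.End R M) :=
  .of_injective (LinearMap.restrictScalarsₗ A R M M A) (LinearMap.restrictScalars_injective _)

section FiniteDimensional

variable (K R M : Type*) [Field K] [CommRing R] [IsDomain R] [IsPrincipalIdealRing R] [Algebra K R]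
  [AddCommGroup M] [Module K M] [Module R M] [IsScalarTower K R M] [FiniteDimensional K M]

theorem finrank_le_finrank_end : finrank K M ≤ finrank K (Module.End R M) := by
  have := module_finite_end K R M
  have : Module.Finite R M := .of_restrictScalars_finite K R M
  obtain ⟨v, hv⟩ := exists_surjective_end_apply R M
  exact LinearMap.finrank_le_finrank_of_surjective (f := (LinearMap.applyₗ v).restrictScalars K) hv

variable {K R M}

theorem surjective_algebraMap_end (h : finrank K (Module.End R M) = finrank K M) :
    Function.Surjective (algebraMap R (Module.End R M)) := by
  have := module_finite_end K R M
  have : IsArtinian R M := isArtinian_of_tower K inferInstance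
  have : Module.Finite R M := .of_restrictScalars_finite K R M
  obtain ⟨v, hv⟩ := exists_surjective_end_apply R M
  have hinj : Function.Injective (LinearMap.applyₗ v : Module.End R M →ₗ[R] M) :=
    (LinearMap.injective_iff_surjective_of_finrank_eq_finrank
      (f := (LinearMap.applyₗ v).restrictScalars K) h).mpr hv
  have hspan : Submodule.span R {v} = ⊤ := by
    by_contra hne
    obtain ⟨c, hc, hle⟩ := exists_end_ne_zero_le_ker hne
    exact hc (hinj ((Submodule.span_singleton_le_iff_mem _ _).mp hle))
  intro c
  obtain ⟨r, hr⟩ := Submodule.mem_span_singleton.mp (hspan ▸ Submodule.mem_top : c v ∈ _)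
  exact ⟨r, hinj hr⟩

end FiniteDimensional

section Centralizer

variable {R : Type*} [CommRing R] {n : ℕ} (A : Matrix (Fin n) (Fin n) R)

theorem aeval_mem_glCent (p : R[X]) : aeval A p ∈ glCent A :=
  show A * _ = _ * A by simpa using congrArg (aeval A) (X_mul (p := p))

/-- Matrices commuting with `A` correspond to the endomorphisms of the `R[X]`-module `AEval'`: the
free module `Rⁿ` with `X` acting as `A`. -/
noncomputable def glCentEquivEnd : glCent A ≃ₗ[R] Module.End R[X] (AEval' A.toLin') where
  toFun Z := LinearMap.ofAEval _ (AEval'.of A.toLin' ∘ₗ Z.1.toLin') fun u ↦ by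
    have hZ : A * Z.1 = Z.1 * A := Z.2
    simp [AEval'.X_smul_of, hZ]
  invFun c :=
    ⟨((AEval'.of A.toLin').symm ∘ₗ c.restrictScalars R ∘ₗ AEval'.of A.toLin').toMatrix', by
      change A * _ = _ * A
      apply Matrix.toLin'.injective
      refine LinearMap.ext fun u ↦ ?_
      simp only [toLin'_mul, toLin'_toMatrix', LinearMap.comp_apply, LinearEquiv.coe_coe,
        LinearMap.coe_restrictScalars, ← AEval'.of_symm_X_smul, ← AEval'.X_smul_of, map_smul]⟩
  map_add' Z W := by ext; simp [LinearMap.ofAEval]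
  map_smul' a Z := by ext; simp [LinearMap.ofAEval]
  left_inv Z := by ext; simp [LinearMap.ofAEval]
  right_inv c := by ext; simp [LinearMap.ofAEval]

theorem glCentEquivEnd_apply_of (Z : glCent A) (u : Fin n → R) :
    glCentEquivEnd A Z (AEval'.of A.toLin' u) = AEval'.of A.toLin' (Z.1 *ᵥ u) :=
  rfl

theorem aeval_toLin' (p : R[X]) : aeval A.toLin' p = (aeval A p).toLin' :=
  aeval_algHom_apply Matrix.toLinAlgEquiv' A p

theorem glCentEquivEnd_aeval (p : R[X]) :
    glCentEquivEnd A ⟨aeval A p, aeval_mem_glCent A p⟩ = algebraMap R[X] _ p := by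
  ext u
  obtain ⟨u, rfl⟩ := (AEval'.of A.toLin').surjective u
  rw [glCentEquivEnd_apply_of, Module.algebraMap_end_apply, ← AEval.of_aeval_smul,
    aeval_toLin', Module.End.smul_def, toLin'_apply]

theorem slCent_eq_glCent_inf_ker_trace :
    slCent A = glCent A ⊓ LinearMap.ker (Matrix.traceLinearMap (Fin n) R R) := by
  ext Z
  exact and_comm

variable {A} {k : Type*} [CommRing k] {f : R →+* k}

theorem exists_mem_glCent_map_eq_aeval (hf : Function.Surjective f) (p : k[X]) :
    ∃ Y ∈ glCent A, Y.map f = aeval (A.map f) p := by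
  obtain ⟨q, rfl⟩ := Polynomial.map_surjective f hf p
  refine ⟨aeval A q, aeval_mem_glCent A q, map_aeval_eq_aeval_map (ψ := f.mapMatrix) ?_ q A⟩
  ext r : 1
  simp [algebraMap_eq_diagonal, diagonal_map, Pi.algebraMap_def]

theorem exists_mem_slCent_map_eq {U Y : Matrix (Fin n) (Fin n) R} (hU : U ∈ glCent A)
    (hU' : IsUnit U.trace) (hY : Y ∈ glCent A) (hY' : (Y.map f).trace = 0) :
    ∃ Y' ∈ slCent A, Y'.map f = Y.map f := by
  obtain ⟨u, hu⟩ := hU'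
  rw [← AddMonoidHom.map_trace] at hY'
  refine ⟨Y - (Y.trace * ↑u⁻¹) • U, ⟨?_, sub_mem hY (Submodule.smul_mem _ _ hU)⟩, ?_⟩
  · simp [← hu]
  · ext i j
    simp [hY']

end Centralizer

section Field

variable {K : Type*} [Field K] {n : ℕ} {A : Matrix (Fin n) (Fin n) K}

variable (A) in
theorem le_finrank_glCent : n ≤ finrank K (glCent A) := by
  rw [(glCentEquivEnd A).finrank_eq]
  simpa [← (AEval'.of A.toLin').finrank_eq] using finrank_le_finrank_end K K[X] (AEval' A.toLin')

theorem exists_aeval_eq_of_mem_glCent (h : finrank K (glCent A) = n)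
    {Z : Matrix (Fin n) (Fin n) K} (hZ : Z ∈ glCent A) : ∃ p : K[X], aeval A p = Z := by
  obtain ⟨p, hp⟩ := surjective_algebraMap_end (K := K) (R := K[X]) (M := AEval' A.toLin')
    (by simpa [← (AEval'.of A.toLin').finrank_eq, ← (glCentEquivEnd A).finrank_eq] using h)
    (glCentEquivEnd A ⟨Z, hZ⟩)
  rw [← glCentEquivEnd_aeval] at hp
  exact ⟨p, congrArg Subtype.val ((glCentEquivEnd A).injective hp)⟩

theorem exists_mem_glCent_trace_ne_zero (h : finrank K (slCent A) < n) :
    ∃ T ∈ glCent A, T.trace ≠ 0 := by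
  by_contra! h0
  have : slCent A = glCent A := le_antisymm (fun _ hZ ↦ hZ.2) fun Z hZ ↦ ⟨h0 Z hZ, hZ⟩
  exact h.not_ge (this ▸ le_finrank_glCent A)

theorem finrank_slCent_add_one {T : Matrix (Fin n) (Fin n) K} (hT : T ∈ glCent A)
    (hT0 : T.trace ≠ 0) : finrank K (slCent A) + 1 = finrank K (glCent A) := by
  let τ : Dual K (glCent A) := Matrix.traceLinearMap (Fin n) K K ∘ₗ (glCent A).subtype
  have hτ : τ ≠ 0 := fun h ↦ hT0 (LinearMap.congr_fun h ⟨T, hT⟩)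
  have hker : (LinearMap.ker τ).map (glCent A).subtype = slCent A := by
    rw [LinearMap.ker_comp, Submodule.map_comap_subtype, slCent_eq_glCent_inf_ker_trace]
  rw [← hker, ← Dual.finrank_ker_add_one_of_ne_zero hτ,
    ((glCent A).equivSubtypeMap _).finrank_eq]

theorem glCent_reduction_surjective {S : Type*} [CommRing S] {f : S →+* K}
    (hf : Function.Surjective f) {X : Matrix (Fin n) (Fin n) S}
    (h : finrank K (glCent (X.map f)) = n) {Z : Matrix (Fin n) (Fin n) K}
    (hZ : Z ∈ glCent (X.map f)) : ∃ Y ∈ glCent X, Y.map f = Z := by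
  obtain ⟨p, rfl⟩ := exists_aeval_eq_of_mem_glCent h hZ
  exact exists_mem_glCent_map_eq_aeval hf p

end Field

theorem slCent_reduction_surjective_general {S : Type*} [CommRing S] [IsLocalRing S] {n : ℕ}
    (X : Matrix (Fin n) (Fin n) S)
    (hreg : Module.finrank (IsLocalRing.ResidueField S)
      (slCent (X.map (IsLocalRing.residue S))) = n - 1) :
    ∀ Z ∈ slCent (X.map (IsLocalRing.residue S)),
      ∃ Y ∈ slCent X, Y.map (IsLocalRing.residue S) = Z := by
  intro Z hZ
  obtain rfl | hn := n.eq_zero_or_pos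
  · exact ⟨0, zero_mem _, Subsingleton.elim _ _⟩
  obtain ⟨T, hT, hT0⟩ := exists_mem_glCent_trace_ne_zero (hreg.trans_lt (by lia))
  have hgl : finrank (IsLocalRing.ResidueField S) (glCent (X.map (IsLocalRing.residue S))) = n := by
    rw [← finrank_slCent_add_one hT hT0, hreg, Nat.sub_add_cancel hn]
  obtain ⟨U, hU, rfl⟩ := glCent_reduction_surjective IsLocalRing.residue_surjective hgl hT
  obtain ⟨Y, hY, rfl⟩ := glCent_reduction_surjective IsLocalRing.residue_surjective hgl hZ.2
  rw [← AddMonoidHom.map_trace, IsLocalRing.residue_ne_zero_iff_isUnit] at hT0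
  exact exists_mem_slCent_map_eq hU hT0 hY hZ.1

/-- Over a commutative local ring `S`, if `X mod m` is `sl_n(S/m)`-regular, then the
reduction map between trace-zero centralizers is surjective. -/
theorem slCent_reduction_surjective {S : Type*} [CommRing S] [IsLocalRing S] {n : ℕ}
    (X : Matrix (Fin n) (Fin n) S) (hX : X.trace = 0)
    (hreg : Module.finrank (IsLocalRing.ResidueField S)
      (slCent (X.map (IsLocalRing.residue S))) = n - 1) :
    ∀ Z ∈ slCent (X.map (IsLocalRing.residue S)),
      ∃ Y ∈ slCent X, Y.map (IsLocalRing.residue S) = Z :=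
  slCent_reduction_surjective_general X hreg
end
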